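/- Let P be a finite poset and ℓ a positive integer. Every convex subposet S of P×[ℓ] is of the form P×[ℓ]^v_u; that is, there exist functions u,v: P → {0,1,…,ℓ} with u(p)+v(p) ≤ ℓ for all p ∈ P, with v order-preserving and u order-reversing, such that S = {(p,i) ∈ P×[ℓ] : u(p) < i < ℓ+1−v(p)}. -/

import Mathlib

/-!
A convex set `S` is the intersection of the up-set and the down-set it generates. Over `p`, the
up-set is `{i | a p < i}` and the down-set is `{i | 1 ≤ i ≤ b p}` (inside `[ℓ]`), where both `a`
and `b` are order-reversing, so `v = ℓ - b` is order-preserving. The fibre of `S` over `p` is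
therefore `(a p, b p]`. Where `a p > b p` it is empty, and replacing `a` by `u = min a b`, which is
still order-reversing, leaves every fibre unchanged while forcing `u + v ≤ ℓ`.
-/

/-- Every convex subposet `S` of `P×[ℓ]` (with `[ℓ] = {1,…,ℓ}`) is of the form
`P×[ℓ]^v_u = {(p,i) : u(p) < i < ℓ+1-v(p)}` for some `u, v : P → {0,1,…,ℓ}` with
`u(p) + v(p) ≤ ℓ`, `v` order-preserving and `u` order-reversing. -/
theorem convex_subposet_eq_uv_form
    {P : Type*} [PartialOrder P] [Fintype P] (ℓ : ℕ) (hℓ : 0 < ℓ)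
    (S : Set (P × ℕ))
    (hSsub : ∀ x ∈ S, 1 ≤ x.2 ∧ x.2 ≤ ℓ)
    (hconv : ∀ a ∈ S, ∀ b ∈ S, ∀ c : P × ℕ, a ≤ c → c ≤ b → c ∈ S) :
    ∃ u v : P → ℕ,
      (∀ p, u p ≤ ℓ) ∧ (∀ p, v p ≤ ℓ) ∧ (∀ p, u p + v p ≤ ℓ) ∧
      (∀ p₁ p₂ : P, p₁ ≤ p₂ → v p₁ ≤ v p₂) ∧
      (∀ p₁ p₂ : P, p₁ ≤ p₂ → u p₂ ≤ u p₁) ∧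
      S = {x : P × ℕ | u x.1 < x.2 ∧ x.2 < ℓ + 1 - v x.1} := by
  classical
  -- `a p` is `ℓ` when no point of `S` lies over an element below `p`.
  let a : P → ℕ := fun p =>
    Nat.findGreatest (fun i => ∀ q ≤ p, ∀ j, (q, j) ∈ S → i < j) ℓ
  -- `b p` is `0` when no point of `S` lies over an element above `p`.
  let b : P → ℕ := fun p => Nat.findGreatest (fun i => ∃ q, p ≤ q ∧ (q, i) ∈ S) ℓ
  have hbl : ∀ p, b p ≤ ℓ := fun p => Nat.findGreatest_le ℓ
  have ha : ∀ p, ∀ q ≤ p, ∀ j, (q, j) ∈ S → a p < j := fun p =>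
    Nat.findGreatest_spec (P := fun i => ∀ q ≤ p, ∀ j, (q, j) ∈ S → i < j)
      (Nat.zero_le ℓ) (fun q _ j hj => (hSsub _ hj).1)
  have ha_anti : ∀ p₁ p₂ : P, p₁ ≤ p₂ → a p₂ ≤ a p₁ := fun p₁ p₂ h =>
    Nat.le_findGreatest (Nat.findGreatest_le ℓ)
      (fun q hq j hj => ha p₂ q (hq.trans h) j hj)
  have hb_anti : ∀ p₁ p₂ : P, p₁ ≤ p₂ → b p₂ ≤ b p₁ := fun p₁ p₂ h =>
    Nat.findGreatest_mono_left (fun _ ⟨q, hq, hS⟩ => ⟨q, h.trans hq, hS⟩) ℓ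
  refine ⟨fun p => min (a p) (b p), fun p => ℓ - b p, fun p => ?_, fun p => Nat.sub_le _ _,
    fun p => ?_, fun p₁ p₂ h => Nat.sub_le_sub_left (hb_anti p₁ p₂ h) ℓ,
    fun p₁ p₂ h => min_le_min (ha_anti p₁ p₂ h) (hb_anti p₁ p₂ h), ?_⟩
  · exact (min_le_right _ _).trans (hbl p)
  · have := hbl p
    dsimp only
    omega
  ext ⟨p, i⟩
  have hbp := hbl p
  simp only [Set.mem_ofPred_eq]
  constructor
  · intro hS
    have h1 : a p < i := ha p p le_rfl i hS
    have h2 : i ≤ b p := Nat.le_findGreatest (hSsub _ hS).2 ⟨p, le_rfl, hS⟩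
    omega
  · rintro ⟨h1, h2⟩
    have hib : i ≤ b p := by omega
    have hai : a p < i := by omega
    obtain ⟨q, hpq, hq⟩ : ∃ q, p ≤ q ∧ (q, b p) ∈ S :=
      Nat.findGreatest_of_ne_zero (P := fun i => ∃ q, p ≤ q ∧ (q, i) ∈ S) (n := ℓ) rfl
        (by omega)
    have hn := Nat.findGreatest_is_greatest hai (hib.trans hbp)
    push Not at hn
    obtain ⟨r, hrp, j, hj, hji⟩ := hn
    exact hconv _ hj _ hq _ ⟨hrp, hji⟩ ⟨hpq, hib⟩
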